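/- arXiv:1805.08930 — 8 statements merged into one kernel-verified Lean document; each statement's English description precedes it below -/
import Mathlib

section
/- Let G be an undirected graph on a finite nonempty vertex set K, viewed as a feedback graph in which each vertex observes itself and all of its neighbors (i.e., the arc set consists of all self-loops together with both orientations of each edge of G). Then for every probability vector π on K, Q_G(π) = ∑_{i∈K} π(i) / (π(i) + ∑_{j adjacent to i in G} π(j)) ≤ β₀(G), where β₀(G) is the independence number of G. -/
/-!
Greedy argument. Write `D i = π i + ∑_{j ~ i} π j` for the mass of the closed neighbourhood of `i`.
In a nonempty vertex set `A`, choose `i` minimizing `D` and delete its closed neighbourhood `N[i]`.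
The deleted vertices `j` satisfy `D j ≥ D i`, so they contribute at most
`∑_{j ∈ N[i]} π j / D i = 1` to the sum. Iterating, the chosen vertices form an
independent set with at least as many elements as the value of the sum
(`exists_indep_sum_le_card`).
-/

open Finset

/-- The independence number of an undirected (simple) graph: the maximum
cardinality of a set of vertices no two of which are adjacent. -/
noncomputable def SimpleGraph.indepNumber {K : Type*} [Fintype K] (G : SimpleGraph K) : ℕ :=
  sSup {n | ∃ S : Finset K, S.card = n ∧ ∀ i ∈ S, ∀ j ∈ S, ¬ G.Adj i j}

/-- The cardinality of an independent set is at most `indepNumber`; the supremum defining the latter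
is taken over a set bounded by the number of vertices. -/
lemma card_le_indepNumber {K : Type*} [Fintype K] (G : SimpleGraph K) (S : Finset K)
    (hS : ∀ i ∈ S, ∀ j ∈ S, ¬ G.Adj i j) : S.card ≤ G.indepNumber := by
  refine le_csSup ⟨Fintype.card K, ?_⟩ ⟨S, rfl, hS⟩
  rintro n ⟨T, rfl, -⟩
  exact T.card_le_univ

/-- The terms `π j / D j` of a set `B` inside the closed neighbourhood of `i` sum to at most `1`
when `i` minimizes `D` on `B`. -/
lemma sum_div_le_one {K : Type*} [Fintype K] [DecidableEq K]
    (G : SimpleGraph K) [DecidableRel G.Adj] (π : K → ℝ) (hπ0 : ∀ i, 0 ≤ π i)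
    (i : K) (B : Finset K) (hB : B ⊆ insert i (G.neighborFinset i))
    (hmin : ∀ j ∈ B, π i + ∑ k ∈ G.neighborFinset i, π k ≤
      π j + ∑ k ∈ G.neighborFinset j, π k) :
    ∑ j ∈ B, π j / (π j + ∑ k ∈ G.neighborFinset j, π k) ≤ 1 := by
  set d := π i + ∑ k ∈ G.neighborFinset i, π k with hd
  have hsum : ∑ j ∈ B, π j ≤ d := by
    rw [hd, ← Finset.sum_insert (by simp)]
    exact Finset.sum_le_sum_of_subset_of_nonneg hB fun j _ _ => hπ0 j
  have hd0 : 0 ≤ d := (Finset.sum_nonneg fun j _ => hπ0 j).trans hsum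
  rcases hd0.eq_or_lt with h | h
  · -- If `D i = 0`, then `π` vanishes on `B`, and so do all the numerators.
    have hz : ∀ j ∈ B, π j = 0 := fun j hj => le_antisymm
      ((Finset.single_le_sum (fun k _ => hπ0 k) hj).trans (hsum.trans h.ge)) (hπ0 j)
    rw [Finset.sum_eq_zero fun j hj => by rw [hz j hj, zero_div]]
    exact zero_le_one
  · calc ∑ j ∈ B, π j / (π j + ∑ k ∈ G.neighborFinset j, π k)
        ≤ ∑ j ∈ B, π j / d := Finset.sum_le_sum fun j hj =>
          div_le_div_of_nonneg_left (hπ0 j) h (hmin j hj)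
      _ = (∑ j ∈ B, π j) / d := (Finset.sum_div _ _ _).symm
      _ ≤ 1 := (div_le_one h).2 hsum

/-- The greedy choice: any vertex set `A` contains an independent set at least as large as the part
of the sum indexed by `A`. The neighbourhoods in the denominators are those of the whole graph. -/
lemma exists_indep_sum_le_card {K : Type*} [Fintype K] [DecidableEq K]
    (G : SimpleGraph K) [DecidableRel G.Adj] (π : K → ℝ) (hπ0 : ∀ i, 0 ≤ π i) (A : Finset K) :
    ∃ S ⊆ A, (∀ i ∈ S, ∀ j ∈ S, ¬ G.Adj i j) ∧
      ∑ i ∈ A, π i / (π i + ∑ j ∈ G.neighborFinset i, π j) ≤ (S.card : ℝ) := by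
  induction A using Finset.strongInduction with
  | H A ih =>
    rcases A.eq_empty_or_nonempty with rfl | hA
    · exact ⟨∅, by simp⟩
    obtain ⟨i, hiA, hmin⟩ :=
      A.exists_min_image (fun i => π i + ∑ j ∈ G.neighborFinset i, π j) hA
    set N := insert i (G.neighborFinset i) with hN
    have hss : A \ N ⊂ A := (Finset.ssubset_iff_of_subset Finset.sdiff_subset).2
      ⟨i, hiA, by simp [hN]⟩
    obtain ⟨S, hSA, hS, hle⟩ := ih (A \ N) hss
    have hout : ∀ j ∈ S, j ≠ i ∧ ¬ G.Adj i j := fun j hj => by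
      have := (Finset.mem_sdiff.1 (hSA hj)).2
      simpa [hN] using this
    refine ⟨insert i S, Finset.insert_subset hiA (hSA.trans Finset.sdiff_subset), ?_, ?_⟩
    · intro a ha b hb
      rcases Finset.mem_insert.1 ha with hai | haS <;>
        rcases Finset.mem_insert.1 hb with hbi | hbS
      · rw [hai, hbi]
        exact G.irrefl
      · rw [hai]
        exact (hout b hbS).2
      · rw [hbi]
        exact fun h => (hout a haS).2 h.symm
      · exact hS a haS b hbS
    · have h1 := sum_div_le_one G π hπ0 i (A ∩ N) Finset.inter_subset_right
        fun j hj => hmin j (Finset.mem_inter.1 hj).1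
      rw [Finset.card_insert_of_notMem fun h => (hout i h).1 rfl,
        ← Finset.sum_inter_add_sum_sdiff A N]
      push_cast
      linarith


/-- For an undirected feedback graph `G` (each vertex observes itself and all its
neighbors) and any probability vector `π`,
`Q_G(π) = ∑ i, π i / (π i + ∑_{j ~ i} π j) ≤ β₀(G)`. -/
theorem stmt0 {K : Type*} [Fintype K] [Nonempty K] [DecidableEq K]
    (G : SimpleGraph K) [DecidableRel G.Adj]
    (π : K → ℝ) (hπ0 : ∀ i, 0 ≤ π i) (hπ1 : ∑ i, π i = 1) :
    ∑ i, π i / (π i + ∑ j ∈ G.neighborFinset i, π j) ≤ (G.indepNumber : ℝ) := by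
  obtain ⟨S, -, hS, hle⟩ := exists_indep_sum_le_card G π hπ0 Finset.univ
  exact hle.trans (Nat.cast_le.2 (card_le_indepNumber G S hS))
end

section
/- Let G be a directed graph on a finite nonempty vertex set K containing every self-loop. Then for every probability vector π on K, Q_G(π) = ∑_{i∈K} π(i) / (∑_{j: (j,i) is an arc of G} π(j)) ≤ mas(G), where mas(G) is the maximum acyclic subgraph number of G. -/
/-!
The proof is a greedy elimination. Restrict to the support of `π`, so that all denominators are
positive. Among the remaining vertices, choose `i` minimizing the in-neighbourhood weight and delete
its in-neighbourhood, which contains `i`. By minimality every deleted `j` contributes at most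
`π j / P i`, where `P i` is the total weight of the deleted vertices, so the deleted terms sum to at
most `1`; the other terms only grow, as their denominators lose summands. A vertex chosen later has
no arc to one chosen earlier, so the chosen vertices, in order of selection, form an acyclic set
whose size bounds the sum.
-/

open Finset

/-- The maximum acyclic subgraph number of a directed graph `G` on a finite
vertex set: the maximum cardinality of a vertex set `S` admitting a topological
ordering, i.e. an injection `f : S → ℕ` with `f i < f j` whenever `(i,j)` is an
arc of `G` between distinct vertices of `S`. -/
noncomputable def masNumber {K : Type*} [Fintype K] (G : K → K → Prop) : ℕ :=
  sSup {n | ∃ S : Finset K, S.card = n ∧ ∃ f : K → ℕ,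
    Set.InjOn f S ∧ ∀ i ∈ S, ∀ j ∈ S, i ≠ j → G i j → f i < f j}

/-- The greedy elimination, by strong induction on the set `A` of remaining vertices. The function
`f` records the order of selection. -/
lemma exists_acyclic_of_pos {K : Type*} (G : K → K → Prop) [DecidableRel G]
    (hloop : ∀ i, G i i) (π : K → ℝ) (A : Finset K) :
    (∀ i ∈ A, 0 < π i) → ∃ S : Finset K, S ⊆ A ∧ (∃ f : K → ℕ,
      Set.InjOn f S ∧ ∀ i ∈ S, ∀ j ∈ S, i ≠ j → G i j → f i < f j) ∧
      ∑ i ∈ A, π i / (∑ j ∈ A.filter (fun j => G j i), π j) ≤ (S.card : ℝ) := by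
  classical
  induction A using Finset.strongInduction with
  | H A ih =>
  intro hpos
  rcases A.eq_empty_or_nonempty with rfl | hne
  · exact ⟨∅, by simp, ⟨fun _ => 0, by simp⟩, by simp⟩
  obtain ⟨i, hiA, hmin⟩ :=
    A.exists_min_image (fun i => ∑ j ∈ A.filter (fun j => G j i), π j) hne
  have hP : ∀ k ∈ A, 0 < ∑ j ∈ A.filter (fun j => G j k), π j := fun k hk =>
    Finset.sum_pos (fun j hj => hpos j (Finset.mem_filter.1 hj).1)
      ⟨k, Finset.mem_filter.2 ⟨hk, hloop k⟩⟩
  have hBA : A.filter (fun j => ¬ G j i) ⊆ A := Finset.filter_subset _ _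
  have hss : A.filter (fun j => ¬ G j i) ⊂ A :=
    Finset.filter_ssubset.2 ⟨i, hiA, not_not.2 (hloop i)⟩
  obtain ⟨S, hS, ⟨f, hinj, hord⟩, hsum⟩ := ih _ hss (fun k hk => hpos k (hBA hk))
  have hSG : ∀ k ∈ S, ¬ G k i := fun k hk => (Finset.mem_filter.1 (hS hk)).2
  have hiS : i ∉ S := fun h => hSG i h (hloop i)
  refine ⟨insert i S, Finset.insert_subset hiA (hS.trans hBA),
    ⟨fun k => if k = i then 0 else f k + 1, ?_, ?_⟩, ?_⟩
  · intro a ha b hb hab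
    simp only [Finset.coe_insert, Set.mem_insert_iff, Finset.mem_coe] at ha hb
    by_cases h1 : a = i <;> by_cases h2 : b = i <;> simp [h1, h2] at hab ⊢
    exact hinj (ha.resolve_left h1) (hb.resolve_left h2) hab
  · intro a ha b hb hab hG
    rw [Finset.mem_insert] at ha hb
    by_cases h2 : b = i
    · subst h2
      exact absurd hG (hSG a (ha.resolve_left hab))
    by_cases h1 : a = i
    · simp [h1, h2]
    · simpa [h1, h2] using hord a (ha.resolve_left h1) b (hb.resolve_left h2) hab hG
  · rw [Finset.card_insert_of_notMem hiS,
      ← Finset.sum_filter_add_sum_filter_not A (fun j => G j i)]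
    have hdel : ∑ k ∈ A.filter (fun j => G j i),
        π k / (∑ j ∈ A.filter (fun j => G j k), π j) ≤ 1 := by
      calc _ ≤ ∑ k ∈ A.filter (fun j => G j i),
            π k / (∑ j ∈ A.filter (fun j => G j i), π j) := by
            refine Finset.sum_le_sum fun k hk => ?_
            have hk' := (Finset.mem_filter.1 hk).1
            exact div_le_div_of_nonneg_left (hpos k hk').le (hP i hiA) (hmin k hk')
        _ = 1 := by rw [← Finset.sum_div, div_self (hP i hiA).ne']
    have hrest : ∑ k ∈ A.filter (fun j => ¬ G j i),
        π k / (∑ j ∈ A.filter (fun j => G j k), π j) ≤ S.card := by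
      refine le_trans (Finset.sum_le_sum fun k hk => ?_) hsum
      refine div_le_div_of_nonneg_left (hpos k (hBA hk)).le ?_ ?_
      · exact Finset.sum_pos (fun j hj => hpos j (hBA (Finset.mem_filter.1 hj).1))
          ⟨k, Finset.mem_filter.2 ⟨hk, hloop k⟩⟩
      · exact Finset.sum_le_sum_of_subset_of_nonneg (Finset.filter_subset_filter _ hBA)
          (fun j hj _ => (hpos j (Finset.mem_filter.1 hj).1).le)
    push_cast
    linarith

/-- For a directed feedback graph `G` containing every self-loop and any
probability vector `π`,
`Q_G(π) = ∑ i, π i / (∑_{j : j → i} π j) ≤ mas(G)`. -/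
theorem stmt1 {K : Type*} [Fintype K] [Nonempty K]
    (G : K → K → Prop) [DecidableRel G] (hloop : ∀ i, G i i)
    (π : K → ℝ) (hπ0 : ∀ i, 0 ≤ π i) (hπ1 : ∑ i, π i = 1) :
    ∑ i, π i / (∑ j ∈ univ.filter (fun j => G j i), π j) ≤ (masNumber G : ℝ) := by
  classical
  obtain ⟨S, -, hf, hsum⟩ := exists_acyclic_of_pos G hloop π
    (univ.filter fun i => 0 < π i) (fun i hi => (Finset.mem_filter.1 hi).2)
  have hmas : S.card ≤ masNumber G := by
    refine le_csSup ⟨Fintype.card K, ?_⟩ ⟨S, rfl, hf⟩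
    rintro n ⟨T, rfl, -⟩
    exact T.card_le_univ
  refine le_trans ?_ (hsum.trans (Nat.cast_le.2 hmas))
  rw [← Finset.sum_filter_of_ne (p := fun i => 0 < π i)]
  · refine Finset.sum_le_sum fun i hi => ?_
    refine div_le_div_of_nonneg_left (hπ0 i) ?_ ?_
    · exact Finset.sum_pos
        (fun j hj => (Finset.mem_filter.1 (Finset.mem_filter.1 hj).1).2)
        ⟨i, Finset.mem_filter.2 ⟨hi, hloop i⟩⟩
    · exact Finset.sum_le_sum_of_subset_of_nonneg
        (Finset.filter_subset_filter _ (Finset.filter_subset _ _)) (fun j _ _ => hπ0 j)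
  · intro i _ hne
    refine (hπ0 i).lt_of_ne fun h => hne ?_
    rw [← h, zero_div]
end

section
/- Let G be a directed graph on a finite vertex set K of cardinality |K| ≥ 1 containing every self-loop, and let 0 < η < 1/2. Then for every probability vector π on K satisfying π(i) ≥ η for all i ∈ K, one has Q_G(π) = ∑_{i∈K} π(i) / (∑_{j: (j,i) is an arc of G} π(j)) ≤ 4 β₀(G) · log(4|K| / (β₀(G) η)), where β₀(G) is the independence number of G and log denotes the natural logarithm. -/
/-!
Vertices are peeled off one at a time, always taking a vertex of largest in-weight in the
induced subgraph on the remaining set `S`. Write `W` for the weight of `S`, `P i` for the in-weight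
of `i` inside `S`, and `N i` for the weight of the closed neighbourhood of `i` inside `S` when
orientations are forgotten.

* The weighted Caro-Wei bound (`exists_indep_sum_div_le_card`) gives `∑ π i / N i ≤ β₀`.
* By Cauchy-Schwarz, `W ^ 2 ≤ (∑ π i / N i) * (∑ π i * N i)`, and
  `∑ π i * N i ≤ 2 * ∑ π i * P i` by double counting, so some `i` has `P i ≥ W / (2 * β₀)`
  (`exists_sum_le_inweight`).
* Removing that vertex costs `π i / P i ≤ 2 * β₀ * (π i / W)` and only decreases the other
  in-weights, hence only increases the remaining terms. Since `x ≤ -log (1 - x)`, the costs telescope to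
  `2 * β₀ * (1 + log (W / η))` (`sum_div_inweight_le`).

With `W = 1` this is at most `4 * β₀ * log (4 * |K| / (β₀ * η))`, because `β₀ ≤ |K|` and
`exp 1 ≤ 4`.
-/

open Finset

/-- The independence number of a directed graph `G`: the maximum cardinality of
a set `S` of vertices such that no arc of `G` joins two distinct vertices of
`S` (orientation ignored; self-loops ignored). -/
noncomputable def dirIndepNumber {K : Type*} [Fintype K] (G : K → K → Prop) : ℕ :=
  sSup {n | ∃ S : Finset K, S.card = n ∧ ∀ i ∈ S, ∀ j ∈ S, i ≠ j → ¬ G i j}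

/-- Weighted Caro-Wei bound. The independent set is built greedily: a vertex with the lightest
closed neighbourhood is kept and that neighbourhood, which contributes at most `1` to the sum,
is deleted. -/
lemma exists_indep_sum_div_le_card {K : Type*} [DecidableEq K] (H : K → K → Prop) [DecidableRel H]
    (hrefl : ∀ i, H i i) (hsymm : ∀ i j, H i j → H j i) (w : K → ℝ) (hw : ∀ i, 0 < w i)
    (S : Finset K) :
    ∃ T ⊆ S, (∀ i ∈ T, ∀ j ∈ T, i ≠ j → ¬ H i j) ∧
      ∑ i ∈ S, w i / (∑ j ∈ S.filter (fun j => H i j), w j) ≤ T.card := by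
  induction S using Finset.strongInduction with
  | H S ih =>
    rcases S.eq_empty_or_nonempty with rfl | hne
    · exact ⟨∅, by simp⟩
    obtain ⟨a, haS, hmin⟩ := S.exists_min_image (fun i => ∑ j ∈ S.filter (fun j => H i j), w j) hne
    have hss : S.filter (fun j => ¬ H a j) ⊂ S :=
      Finset.filter_ssubset.2 ⟨a, haS, by simpa using hrefl a⟩
    obtain ⟨T, hTS, hT, hsum⟩ := ih _ hss
    have haT : a ∉ T := fun h => (Finset.mem_filter.1 (hTS h)).2 (hrefl a)
    refine ⟨insert a T, ?_, ?_, ?_⟩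
    · exact Finset.insert_subset haS (hTS.trans (Finset.filter_subset _ _))
    · have key : ∀ j ∈ T, ¬ H a j := fun j hj => (Finset.mem_filter.1 (hTS hj)).2
      intro i hi j hj hij
      rcases Finset.mem_insert.1 hi with rfl | hi' <;> rcases Finset.mem_insert.1 hj with rfl | hj'
      · exact absurd rfl hij
      · exact key j hj'
      · exact fun h => key i hi' (hsymm _ _ h)
      · exact hT i hi' j hj' hij
    · have hpos : 0 < ∑ j ∈ S.filter (fun j => H a j), w j :=
        Finset.sum_pos (fun i _ => hw i) ⟨a, Finset.mem_filter.2 ⟨haS, hrefl a⟩⟩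
      have hnear : ∑ i ∈ S.filter (fun j => H a j),
          w i / (∑ j ∈ S.filter (fun j => H i j), w j) ≤ 1 := by
        calc _ ≤ ∑ i ∈ S.filter (fun j => H a j),
              w i / (∑ j ∈ S.filter (fun j => H a j), w j) :=
              Finset.sum_le_sum fun i hi => div_le_div_of_nonneg_left (hw i).le hpos
                (hmin i (Finset.mem_filter.1 hi).1)
          _ = 1 := by rw [← Finset.sum_div, div_self hpos.ne']
      have hfar : ∑ i ∈ S.filter (fun j => ¬ H a j),
          w i / (∑ j ∈ S.filter (fun j => H i j), w j) ≤ T.card := by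
        refine le_trans (Finset.sum_le_sum fun i hi => ?_) hsum
        exact div_le_div_of_nonneg_left (hw i).le
          (Finset.sum_pos (fun i _ => hw i) ⟨i, Finset.mem_filter.2 ⟨hi, hrefl i⟩⟩)
          (Finset.sum_le_sum_of_subset_of_nonneg
            (Finset.filter_subset_filter _ (Finset.filter_subset _ _)) fun i _ _ => (hw i).le)
      rw [← Finset.sum_filter_add_sum_filter_not S (fun j => H a j),
        Finset.card_insert_of_notMem haT]
      push_cast
      linarith

lemma bddAbove_indep {K : Type*} [Fintype K] (G : K → K → Prop) :
    BddAbove {n | ∃ S : Finset K, S.card = n ∧ ∀ i ∈ S, ∀ j ∈ S, i ≠ j → ¬ G i j} :=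
  ⟨Fintype.card K, by rintro n ⟨S, rfl, -⟩; exact Finset.card_le_univ S⟩

lemma card_le_dirIndepNumber {K : Type*} [Fintype K] (G : K → K → Prop) (S : Finset K)
    (hS : ∀ i ∈ S, ∀ j ∈ S, i ≠ j → ¬ G i j) : S.card ≤ dirIndepNumber G :=
  le_csSup (bddAbove_indep G) ⟨S, rfl, hS⟩

lemma dirIndepNumber_le_card {K : Type*} [Fintype K] (G : K → K → Prop) :
    dirIndepNumber G ≤ Fintype.card K :=
  csSup_le ⟨0, ∅, by simp⟩ (by rintro n ⟨S, rfl, -⟩; exact Finset.card_le_univ S)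

lemma dirIndepNumber_pos {K : Type*} [Fintype K] [Nonempty K] (G : K → K → Prop) :
    0 < dirIndepNumber G := by
  obtain ⟨a⟩ := ‹Nonempty K›
  have := card_le_dirIndepNumber G {a} (by simp)
  rwa [Finset.card_singleton] at this

/-- A weighted Turán-type bound: some vertex of `S` receives at least the fraction
`1 / (2 * β₀)` of the weight of `S`. -/
lemma exists_sum_le_inweight {K : Type*} [Fintype K] [DecidableEq K]
    (G : K → K → Prop) [DecidableRel G] (hloop : ∀ i, G i i) (w : K → ℝ) (hw : ∀ i, 0 < w i)
    (S : Finset K) (hne : S.Nonempty) :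
    ∃ i ∈ S, ∑ j ∈ S, w j ≤
      2 * (dirIndepNumber G : ℝ) * ∑ j ∈ S.filter (fun j => G j i), w j := by
  obtain ⟨a, haS, hmax⟩ := S.exists_max_image (fun i => ∑ j ∈ S.filter (fun j => G j i), w j) hne
  refine ⟨a, haS, ?_⟩
  set P := fun i => ∑ j ∈ S.filter (fun j => G j i), w j with hP
  set N := fun i => ∑ j ∈ S.filter (fun j => G i j ∨ G j i), w j with hN
  have hW : 0 < ∑ j ∈ S, w j := Finset.sum_pos (fun i _ => hw i) hne
  have hNpos : ∀ i ∈ S, 0 < N i := fun i hi =>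
    Finset.sum_pos (fun i _ => hw i) ⟨i, Finset.mem_filter.2 ⟨hi, Or.inl (hloop i)⟩⟩
  obtain ⟨T, -, hT, hcw⟩ := exists_indep_sum_div_le_card (fun i j => G i j ∨ G j i)
    (fun i => Or.inl (hloop i)) (fun i j h => h.symm) w hw S
  have hcard : T.card ≤ dirIndepNumber G :=
    card_le_dirIndepNumber G T fun i hi j hj hij h => hT i hi j hj hij (Or.inl h)
  have hα : ∑ i ∈ S, w i / N i ≤ dirIndepNumber G := hcw.trans (by exact_mod_cast hcard)
  have hcs : (∑ i ∈ S, w i) ^ 2 ≤ (∑ i ∈ S, w i / N i) * ∑ i ∈ S, w i * N i :=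
    Finset.sum_sq_le_sum_mul_sum_of_sq_le_mul S
      (fun i hi => div_nonneg (hw i).le (hNpos i hi).le)
      (fun i hi => mul_nonneg (hw i).le (hNpos i hi).le)
      (fun i hi => by have := (hNpos i hi).ne'; apply le_of_eq; field_simp)
  -- Out-weights and in-weights have the same weighted total.
  have hswap : ∑ i ∈ S, w i * ∑ j ∈ S.filter (fun j => G i j), w j = ∑ i ∈ S, w i * P i := by
    simp only [hP, Finset.sum_filter, Finset.mul_sum]
    rw [Finset.sum_comm]
    refine Finset.sum_congr rfl fun i _ => Finset.sum_congr rfl fun j _ => ?_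
    split_ifs <;> ring
  have hNP : ∀ i, N i ≤ (∑ j ∈ S.filter (fun j => G i j), w j) + P i := by
    intro i
    simp only [hN, hP, Finset.sum_filter, ← Finset.sum_add_distrib]
    refine Finset.sum_le_sum fun j _ => ?_
    have := hw j
    split_ifs <;> first | linarith | tauto
  have hsumN : ∑ i ∈ S, w i * N i ≤ 2 * ((∑ i ∈ S, w i) * P a) := by
    calc _ ≤ ∑ i ∈ S, w i * ((∑ j ∈ S.filter (fun j => G i j), w j) + P i) :=
          Finset.sum_le_sum fun i _ => mul_le_mul_of_nonneg_left (hNP i) (hw i).le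
      _ = 2 * ∑ i ∈ S, w i * P i := by
          simp only [mul_add, Finset.sum_add_distrib, hswap]; ring
      _ ≤ 2 * ∑ i ∈ S, w i * P a := by
          gcongr with i hi
          · exact (hw i).le
          · exact hmax i hi
      _ = _ := by rw [Finset.sum_mul]
  have hsumN0 : 0 ≤ ∑ i ∈ S, w i * N i :=
    Finset.sum_nonneg fun i hi => mul_nonneg (hw i).le (hNpos i hi).le
  have h1 : (∑ i ∈ S, w i) ^ 2 ≤ dirIndepNumber G * (2 * ((∑ i ∈ S, w i) * P a)) :=
    hcs.trans (mul_le_mul hα hsumN hsumN0 (Nat.cast_nonneg _))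
  refine le_of_mul_le_mul_left ?_ hW
  calc _ = (∑ i ∈ S, w i) ^ 2 := by ring
    _ ≤ _ := h1
    _ = _ := by ring

/-- The bound for every induced subgraph, by peeling off vertices of large in-weight. -/
lemma sum_div_inweight_le {K : Type*} [Fintype K] [DecidableEq K]
    (G : K → K → Prop) [DecidableRel G] (hloop : ∀ i, G i i) (η : ℝ) (hη0 : 0 < η)
    (w : K → ℝ) (hwη : ∀ i, η ≤ w i) (S : Finset K) (hne : S.Nonempty) :
    ∑ i ∈ S, w i / (∑ j ∈ S.filter (fun j => G j i), w j) ≤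
      2 * (dirIndepNumber G : ℝ) * (1 + Real.log ((∑ i ∈ S, w i) / η)) := by
  have hw : ∀ i, 0 < w i := fun i => hη0.trans_le (hwη i)
  induction S using Finset.strongInduction with
  | H S ih =>
    obtain ⟨a, haS, ha⟩ := exists_sum_le_inweight G hloop w hw S hne
    have hWS : 0 < ∑ j ∈ S, w j := Finset.sum_pos (fun i _ => hw i) hne
    have hPa : 0 < ∑ j ∈ S.filter (fun j => G j a), w j :=
      Finset.sum_pos (fun i _ => hw i) ⟨a, Finset.mem_filter.2 ⟨haS, hloop a⟩⟩
    have hcost : w a / (∑ j ∈ S.filter (fun j => G j a), w j) ≤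
        2 * (dirIndepNumber G : ℝ) * (w a / ∑ j ∈ S, w j) := by
      rw [← mul_div_assoc, div_le_div_iff₀ hPa hWS]
      nlinarith [mul_le_mul_of_nonneg_left ha (hw a).le]
    rw [← Finset.add_sum_erase S _ haS]
    have hsplit : w a + ∑ i ∈ S.erase a, w i = ∑ i ∈ S, w i := Finset.add_sum_erase S w haS
    have hα0 : (0 : ℝ) ≤ 2 * (dirIndepNumber G : ℝ) := by positivity
    rcases (S.erase a).eq_empty_or_nonempty with he | he
    · rw [he, Finset.sum_empty, add_zero] at hsplit
      rw [he, Finset.sum_empty, add_zero]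
      refine hcost.trans (mul_le_mul_of_nonneg_left ?_ hα0)
      rw [← hsplit, div_self (hw a).ne']
      linarith [Real.log_nonneg ((one_le_div hη0).2 (hwη a))]
    · have hih := ih _ (Finset.erase_ssubset haS) he
      have hrest : ∑ i ∈ S.erase a, w i / (∑ j ∈ S.filter (fun j => G j i), w j) ≤
          ∑ i ∈ S.erase a, w i / (∑ j ∈ (S.erase a).filter (fun j => G j i), w j) :=
        Finset.sum_le_sum fun i hi => div_le_div_of_nonneg_left (hw i).le
          (Finset.sum_pos (fun i _ => hw i) ⟨i, Finset.mem_filter.2 ⟨hi, hloop i⟩⟩)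
          (Finset.sum_le_sum_of_subset_of_nonneg
            (Finset.filter_subset_filter _ (Finset.erase_subset _ _)) fun i _ _ => (hw i).le)
      have hW' : 0 < ∑ j ∈ S.erase a, w j := Finset.sum_pos (fun i _ => hw i) he
      -- `log (1 - x) ≤ -x` at `x = w a / W`.
      have hlog := Real.log_le_sub_one_of_pos (div_pos hW' hWS)
      rw [Real.log_div hW'.ne' hWS.ne'] at hlog
      have hx : w a / (∑ j ∈ S, w j) = 1 - (∑ j ∈ S.erase a, w j) / ∑ j ∈ S, w j := by
        rw [eq_sub_iff_add_eq, ← add_div, hsplit, div_self hWS.ne']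
      have htel : w a / (∑ j ∈ S, w j) + (1 + Real.log ((∑ i ∈ S.erase a, w i) / η)) ≤
          1 + Real.log ((∑ i ∈ S, w i) / η) := by
        rw [Real.log_div hW'.ne' hη0.ne', Real.log_div hWS.ne' hη0.ne']
        linarith
      have := mul_le_mul_of_nonneg_left htel hα0
      rw [mul_add] at this
      linarith

/-- Lemma 5 of Alon et al.: for a directed feedback graph `G` containing every
self-loop and any probability vector `π` with all entries at least `η`
(`0 < η < 1/2`), `Q_G(π) ≤ 4 β₀(G) log (4K / (β₀(G) η))`. -/
theorem stmt2 {K : Type*} [Fintype K] [Nonempty K]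
    (G : K → K → Prop) [DecidableRel G] (hloop : ∀ i, G i i)
    (η : ℝ) (hη0 : 0 < η) (hη1 : η < 1/2)
    (π : K → ℝ) (hπ0 : ∀ i, 0 ≤ π i) (hπ1 : ∑ i, π i = 1) (hπη : ∀ i, η ≤ π i) :
    ∑ i, π i / (∑ j ∈ univ.filter (fun j => G j i), π j) ≤
      4 * (dirIndepNumber G : ℝ) *
        Real.log (4 * (Fintype.card K : ℝ) / ((dirIndepNumber G : ℝ) * η)) := by
  classical
  have hα : (0 : ℝ) < dirIndepNumber G := by exact_mod_cast dirIndepNumber_pos G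
  have hαn : (dirIndepNumber G : ℝ) ≤ Fintype.card K := by exact_mod_cast dirIndepNumber_le_card G
  have hQ := sum_div_inweight_le G hloop η hη0 π hπη univ univ_nonempty
  rw [hπ1] at hQ
  refine hQ.trans ?_
  have hlogη : 0 ≤ Real.log (1 / η) :=
    Real.log_nonneg ((one_le_div hη0).2 (by linarith))
  have h4 : 1 ≤ Real.log 4 := by
    rw [Real.le_log_iff_exp_le (by norm_num)]
    linarith [Real.exp_one_lt_d9]
  have hmono : Real.log (4 * (1 / η)) ≤
      Real.log (4 * (Fintype.card K : ℝ) / ((dirIndepNumber G : ℝ) * η)) := by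
    refine Real.log_le_log (by positivity) ?_
    rw [mul_one_div, div_le_div_iff₀ hη0 (by positivity)]
    nlinarith [mul_le_mul_of_nonneg_right hαn hη0.le]
  rw [Real.log_mul (by norm_num) (by positivity)] at hmono
  nlinarith
end

section
/- Let G be an undirected graph on a finite nonempty vertex set K, viewed as a feedback graph in which each vertex observes itself and all of its neighbors. Then for every probability vector π on K, Q_G(π) = ∑_{i∈K} π(i) / (π(i) + ∑_{j adjacent to i in G} π(j)) ≤ χ(G), where χ(G) is the clique cover number of G. -/
/-!
Split the sum along a cover of the vertex set by `cliqueCoverNumber` cliques. For a vertex `i` of a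
clique `C`, all of `C` lies in the closed neighborhood of `i`, so the denominator at `i` is at least
`∑ j ∈ C, π j`. Hence the terms of `C` add up to at most `(∑ i ∈ C, π i) / (∑ j ∈ C, π j) ≤ 1`, and
the whole sum is at most the number of cliques.
-/

open Finset

/-- The clique cover number of an undirected (simple) graph `G`: the minimum
number of parts of a partition of the vertex set into cliques, expressed as the
least `n` such that the vertices can be colored with `n` colors with each color
class a clique. -/
noncomputable def SimpleGraph.cliqueCoverNumber {K : Type*} [Fintype K]
    (G : SimpleGraph K) : ℕ :=
  sInf {n | ∃ f : K → Fin n, ∀ i j, f i = f j → i ≠ j → G.Adj i j}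

/-- The infimum defining the clique cover number is attained: the cover by singletons shows that
the set of admissible sizes is nonempty. -/
theorem SimpleGraph.exists_cliqueCover {K : Type*} [Fintype K] (G : SimpleGraph K) :
    ∃ f : K → Fin G.cliqueCoverNumber, ∀ i j, f i = f j → i ≠ j → G.Adj i j := by
  have hne : {n | ∃ f : K → Fin n, ∀ i j, f i = f j → i ≠ j → G.Adj i j}.Nonempty :=
    ⟨Fintype.card K, Fintype.equivFin K,
      fun i j hij hne => absurd ((Fintype.equivFin K).injective hij) hne⟩
  exact Nat.sInf_mem hne

/-- Each clique contributes at most `1` to the sum. -/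
theorem SimpleGraph.sum_clique_le_one {K : Type*} [Fintype K] [DecidableEq K]
    (G : SimpleGraph K) [DecidableRel G.Adj] (π : K → ℝ) (hπ0 : ∀ i, 0 ≤ π i)
    (C : Finset K) (hC : ∀ i ∈ C, ∀ j ∈ C, i ≠ j → G.Adj i j) :
    ∑ i ∈ C, π i / (π i + ∑ j ∈ G.neighborFinset i, π j) ≤ 1 := by
  have hden : ∀ i ∈ C, ∑ j ∈ C, π j ≤ π i + ∑ j ∈ G.neighborFinset i, π j := by
    intro i hi
    rw [← Finset.sum_insert (by simp : i ∉ G.neighborFinset i)]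
    refine Finset.sum_le_sum_of_subset_of_nonneg (fun j hj => ?_) (fun j _ _ => hπ0 j)
    rw [Finset.mem_insert, SimpleGraph.mem_neighborFinset]
    by_cases h : j = i
    · exact Or.inl h
    · exact Or.inr (hC i hi j hj (Ne.symm h))
  rcases (Finset.sum_nonneg fun j _ => hπ0 j : 0 ≤ ∑ j ∈ C, π j).eq_or_lt with h0 | hpos
  · -- A clique of zero mass has only zero numerators.
    have hz := (Finset.sum_eq_zero_iff_of_nonneg fun j _ => hπ0 j).1 h0.symm
    rw [Finset.sum_eq_zero fun i hi => by rw [hz i hi, zero_div]]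
    exact zero_le_one
  · calc ∑ i ∈ C, π i / (π i + ∑ j ∈ G.neighborFinset i, π j)
        ≤ ∑ i ∈ C, π i / ∑ j ∈ C, π j :=
          Finset.sum_le_sum fun i hi => div_le_div_of_nonneg_left (hπ0 i) hpos (hden i hi)
      _ = 1 := by rw [← Finset.sum_div, div_self hpos.ne']

/-- For an undirected feedback graph `G` (each vertex observes itself and all
its neighbors) and any probability vector `π`,
`Q_G(π) = ∑ i, π i / (π i + ∑_{j ~ i} π j) ≤ χ(G)`, the clique cover number. -/
theorem stmt5 {K : Type*} [Fintype K] [Nonempty K] [DecidableEq K]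
    (G : SimpleGraph K) [DecidableRel G.Adj]
    (π : K → ℝ) (hπ0 : ∀ i, 0 ≤ π i) (hπ1 : ∑ i, π i = 1) :
    ∑ i, π i / (π i + ∑ j ∈ G.neighborFinset i, π j) ≤ (G.cliqueCoverNumber : ℝ) := by
  obtain ⟨f, hf⟩ := G.exists_cliqueCover
  rw [← Finset.sum_fiberwise Finset.univ f]
  calc _ ≤ ∑ _c : Fin G.cliqueCoverNumber, (1 : ℝ) :=
        Finset.sum_le_sum fun c _ => G.sum_clique_le_one π hπ0 _ fun i hi j hj hij =>
          hf i j (((Finset.mem_filter.1 hi).2).trans (Finset.mem_filter.1 hj).2.symm) hij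
    _ = G.cliqueCoverNumber := by simp
end

section
/- Under the Bayesian bandit setup, the expected instantaneous regret of Thompson Sampling satisfies E[Y_{A*}] − ∑_{a∈K} α(a) E[Y_a] ≤ √(1/2) · ∑_{a∈K} α(a) √(d(a,a)). -/
/-!
Conditioning on the value of `A*` gives
`E[Y_{A*}] − ∑ a, α a * E[Y_a] = ∑ a, α a * (E[Y_a | A* = a] − E[Y_a])`, so it suffices to bound the
difference of the means of two laws on `[0, 1]` by `√(D / 2)`. This is a consequence of Pinsker's
inequality, obtained here without total variation (`two_mul_sq_integral_sub_le`): nonnegativity of the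
divergence of `μ` from an exponential tilt of `ν` is the Donsker–Varadhan inequality
`∫ f ∂μ ≤ D(μ‖ν) + log ∫ exp f ∂ν`; taking `f x = t * (x − E_ν)`, Hoeffding's lemma bounds the last
term by `t² / 8`, and `t` is then optimized.
-/

open MeasureTheory ENNReal Classical Finset ProbabilityTheory

/-- The Kullback–Leibler divergence `D(μ‖ν)` of `μ` with respect to `ν`:
`∫ log (dμ/dν) dμ` when `μ ≪ ν` (and the integrand is integrable; for
probability measures non-integrability means the divergence is `+∞`), and `+∞`
when `μ` is not absolutely continuous with respect to `ν`. -/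
noncomputable def klDiv {Ω : Type*} [MeasurableSpace Ω] (μ ν : Measure Ω) : ℝ≥0∞ :=
  if μ ≪ ν ∧ Integrable (fun ω => Real.log (μ.rnDeriv ν ω).toReal) μ then
    ENNReal.ofReal (∫ ω, Real.log (μ.rnDeriv ν ω).toReal ∂μ)
  else ⊤

/-- The Donsker–Varadhan inequality, from nonnegativity of the divergence of `μ` from `ν.tilted f`. -/
lemma integral_le_llr_add_log {α : Type*} [MeasurableSpace α] (μ ν : Measure α)
    [IsProbabilityMeasure μ] [IsProbabilityMeasure ν] (hμν : μ ≪ ν)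
    (h_int : Integrable (llr μ ν) μ) (f : α → ℝ) (hfμ : Integrable f μ)
    (hfν : Integrable (fun x => Real.exp (f x)) ν) :
    ∫ x, f x ∂μ ≤ ∫ x, llr μ ν x ∂μ + Real.log (∫ x, Real.exp (f x) ∂ν) := by
  have : IsProbabilityMeasure (ν.tilted f) := isProbabilityMeasure_tilted hfν
  have h1 := integral_llr_tilted_right hμν hfμ hfν h_int
  have h2 := InformationTheory.integral_llr_add_sub_measure_univ_nonneg
    (hμν.trans (absolutelyContinuous_tilted hfν))
    (integrable_llr_tilted_right hμν hfμ h_int hfν)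
  simp only [probReal_univ] at h2
  linarith

/-- Pinsker-type bound on the difference of the means of two laws on `[0, 1]`; the support condition
on `ν` passes to `μ` by absolute continuity. -/
lemma two_mul_sq_integral_sub_le (μ ν : Measure ℝ) [IsProbabilityMeasure μ]
    [IsProbabilityMeasure ν] (hμν : μ ≪ ν) (h_int : Integrable (llr μ ν) μ)
    (hν : ∀ᵐ x ∂ν, x ∈ Set.Icc (0 : ℝ) 1) :
    2 * (∫ x, x ∂μ - ∫ x, x ∂ν) ^ 2 ≤ ∫ x, llr μ ν x ∂μ := by
  have hsub := hasSubgaussianMGF_of_mem_Icc (X := fun x : ℝ => x) aemeasurable_id hν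
  set m := ∫ x, x ∂ν with hm
  have hμ1 : Integrable (fun x : ℝ => x) μ :=
    Integrable.of_mem_Icc 0 1 aemeasurable_id (hμν.ae_le hν)
  -- `t = 4 * (E_μ − E_ν)` maximizes `t * (E_μ − E_ν) − t ^ 2 / 8`.
  set t := 4 * (∫ x, x ∂μ - m) with ht
  have hexp := hsub.integrable_exp_mul t
  have h := integral_le_llr_add_log μ ν hμν h_int (fun x => t * (x - m))
    ((hμ1.sub (integrable_const m)).const_mul t) hexp
  have hlog : Real.log (∫ x, Real.exp (t * (x - m)) ∂ν) ≤ t ^ 2 / 8 := by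
    rw [Real.log_le_iff_le_exp (integral_exp_pos hexp)]
    refine (hsub.mgf_le t).trans (le_of_eq ?_)
    congr 1
    norm_num
    ring
  rw [integral_const_mul, integral_sub hμ1 (integrable_const m)] at h
  simp only [integral_const, probReal_univ, one_smul] at h
  have : ∫ x, x ∂μ - m = t / 4 := by rw [ht]; ring
  rw [this] at h ⊢
  nlinarith

lemma ofReal_integral_sub_le (μ ν : Measure ℝ) [IsProbabilityMeasure μ]
    [IsProbabilityMeasure ν] (hν : ∀ᵐ x ∂ν, x ∈ Set.Icc (0 : ℝ) 1) :
    ENNReal.ofReal (∫ x, x ∂μ - ∫ x, x ∂ν) ≤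
      ENNReal.ofReal (Real.sqrt (1/2)) * (klDiv μ ν) ^ (1/2 : ℝ) := by
  unfold klDiv
  split_ifs with h
  · have h2 := two_mul_sq_integral_sub_le μ ν h.1 h.2 hν
    have hD : 0 ≤ ∫ x, Real.log (μ.rnDeriv ν x).toReal ∂μ := le_trans (by positivity) h2
    rw [ENNReal.ofReal_rpow_of_nonneg hD (by norm_num), ← Real.sqrt_eq_rpow,
      ← ENNReal.ofReal_mul (Real.sqrt_nonneg _), ← Real.sqrt_mul (by norm_num)]
    refine ENNReal.ofReal_le_ofReal (Real.le_sqrt_of_sq_le ?_)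
    simp only [llr] at h2
    linarith
  · rw [ENNReal.top_rpow_of_pos (by norm_num), ENNReal.mul_top]
    · exact le_top
    · simp

lemma ofReal_sum_le_sum_ofReal {K : Type*} (s : Finset K) (f : K → ℝ) :
    ENNReal.ofReal (∑ a ∈ s, f a) ≤ ∑ a ∈ s, ENNReal.ofReal (f a) :=
  Finset.le_sum_of_subadditive _ (by simp) (fun _ _ => ENNReal.ofReal_add_le) s f

/-- The law of total expectation for `Y_{A*}`. -/
lemma integral_comp_eq_sum_cond {Ω : Type*} [MeasurableSpace Ω] (P : Measure Ω)
    [IsProbabilityMeasure P] {K : Type*} [Fintype K] [MeasurableSpace K]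
    [MeasurableSingletonClass K] (Astar : Ω → K) (hA : Measurable Astar)
    (hα : ∀ a, 0 < P {ω | Astar ω = a})
    (Y : K → Ω → ℝ) (hY : ∀ a, Integrable (Y a) P) :
    ∫ ω, Y (Astar ω) ω ∂P = ∑ a, (P {ω | Astar ω = a}).toReal *
      ∫ ω, Y a ω ∂(P[|{ω | Astar ω = a}]) := by
  have hms (a : K) : MeasurableSet {ω | Astar ω = a} := hA (measurableSet_singleton a)
  have h1 (ω : Ω) :
      Y (Astar ω) ω = ∑ a, Set.indicator {ω | Astar ω = a} (Y a) ω := by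
    simp [Set.indicator_apply]
  simp_rw [h1]
  rw [integral_finsetSum _ fun a _ => (hY a).indicator (hms a)]
  refine Finset.sum_congr rfl fun a _ => ?_
  rw [integral_indicator (hms a), ProbabilityTheory.cond, integral_smul_measure, smul_eq_mul,
    ENNReal.toReal_inv, mul_inv_cancel_left₀]
  exact (ENNReal.toReal_pos (hα a).ne' (measure_ne_top _ _)).ne'

/-- Expected instantaneous regret bound for Thompson Sampling:
`E[Y_{A*}] − ∑ a, α a * E[Y_a] ≤ √(1/2) * ∑ a, α a * √(d(a,a))`, where
`α a = P(A* = a)` and `d(a, a*)` is the KL divergence between the law of `Y_a`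
under `P(·|A* = a*)` and its law under `P`. -/
theorem stmt7 {Ω : Type*} [MeasurableSpace Ω] (P : Measure Ω) [IsProbabilityMeasure P]
    {K : Type*} [Fintype K] [Nonempty K] [MeasurableSpace K] [MeasurableSingletonClass K]
    (Astar : Ω → K) (hA : Measurable Astar)
    (hα : ∀ a, 0 < P {ω | Astar ω = a})
    (Y : K → Ω → ℝ) (hY : ∀ a, Measurable (Y a))
    (hY0 : ∀ a ω, 0 ≤ Y a ω) (hY1 : ∀ a ω, Y a ω ≤ 1) :
    ENNReal.ofReal ((∫ ω, Y (Astar ω) ω ∂P) -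
        ∑ a, (P {ω | Astar ω = a}).toReal * ∫ ω, Y a ω ∂P) ≤
      ENNReal.ofReal (Real.sqrt (1/2)) *
        ∑ a, ENNReal.ofReal ((P {ω | Astar ω = a}).toReal) *
          (klDiv (Measure.map (Y a) (P[|{ω | Astar ω = a}]))
              (Measure.map (Y a) P)) ^ (1/2 : ℝ) := by
  have hYint (a : K) : Integrable (Y a) P :=
    Integrable.of_mem_Icc 0 1 (hY a).aemeasurable (ae_of_all _ fun ω => ⟨hY0 a ω, hY1 a ω⟩)
  rw [integral_comp_eq_sum_cond P Astar hA hα Y hYint, ← Finset.sum_sub_distrib]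
  refine (ofReal_sum_le_sum_ofReal _ _).trans ?_
  rw [Finset.mul_sum]
  refine Finset.sum_le_sum fun a _ => ?_
  have : IsProbabilityMeasure (P[|{ω | Astar ω = a}]) := cond_isProbabilityMeasure (hα a).ne'
  have := Measure.isProbabilityMeasure_map (μ := P) (hY a).aemeasurable
  have := Measure.isProbabilityMeasure_map (μ := P[|{ω | Astar ω = a}]) (hY a).aemeasurable
  have key := ofReal_integral_sub_le (Measure.map (Y a) (P[|{ω | Astar ω = a}]))
    (Measure.map (Y a) P) ((ae_map_iff (hY a).aemeasurable measurableSet_Icc).2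
      (ae_of_all _ fun ω => ⟨hY0 a ω, hY1 a ω⟩))
  rw [integral_map (f := fun x : ℝ => x) (hY a).aemeasurable aestronglyMeasurable_id,
    integral_map (f := fun x : ℝ => x) (hY a).aemeasurable aestronglyMeasurable_id] at key
  rw [← mul_sub, ENNReal.ofReal_mul ENNReal.toReal_nonneg, mul_left_comm]
  gcongr
end

section
/- (Information ratio bound for Thompson Sampling, explicit KL form.) Let G be a directed feedback graph on K containing every self-loop, and for a ∈ K set N_α(a) = ∑_{a': (a',a) is an arc of G} α(a') and ḡ(a) = ∑_{a*∈K} α(a*) d(a, a*) (the KL-divergence form of the mutual information between A* and Y_a). Then (E[Y_{A*}] − ∑_{a∈K} α(a) E[Y_a])² ≤ (1/2) · Q_G(α) · ∑_{a∈K} N_α(a) ḡ(a), where Q_G(α) = ∑_{a∈K} α(a) / N_α(a). In particular, the squared expected instantaneous regret of Thompson Sampling is at most (1/2) Q_G(α) times its expected information gain. -/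
/-!
Conditioning on `A* = a` shows that the regret is `∑ a, α a * δ a`, where
`δ a = E[Y_a | A* = a] - E[Y_a]`. A Pinsker-type inequality gives `2 * δ a ^ 2 ≤ d a a`. Weighting
by `N a = ∑ a' → a, α a'`, the Cauchy–Schwarz inequality yields
`(∑ a, α a * δ a) ^ 2 ≤ (∑ a, α a / N a) * ∑ a, N a * (α a * δ a ^ 2)`, and `α a * d a a` is one
term of the nonnegative sum `ḡ a = ∑ a*, α a* * d a a*`.

The Pinsker-type inequality (`pinsker_unitInterval`) compares the means of two laws on `[0, 1]`.
It follows from the nonnegativity of the divergence of `μ` from the exponential tilting of `ν`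
by `x ↦ t * (x - E_ν)` (the easy half of the Donsker–Varadhan formula), combined with Hoeffding's
lemma and the choice `t = 4 * (E_μ - E_ν)`.

The divergence may be infinite, so the final estimate is carried out in `ℝ≥0∞`.
-/

open MeasureTheory ENNReal Classical Finset ProbabilityTheory

/-- The Pinsker-type inequality for the means of two probability measures on the line, the second
of which is carried by `[0, 1]`. -/
lemma pinsker_unitInterval (μ ν : Measure ℝ) [IsProbabilityMeasure μ] [IsProbabilityMeasure ν]
    (hν : ∀ᵐ x ∂ν, x ∈ Set.Icc (0 : ℝ) 1) :
    ENNReal.ofReal (2 * ((∫ x, x ∂μ) - ∫ x, x ∂ν) ^ 2) ≤ klDiv μ ν := by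
  unfold klDiv
  split_ifs with h
  swap
  · exact le_top
  obtain ⟨hac, hint⟩ := h
  apply ENNReal.ofReal_le_ofReal
  have hμ : ∀ᵐ x ∂μ, x ∈ Set.Icc (0 : ℝ) 1 := hac.ae_le hν
  have hiμ : Integrable (fun x : ℝ => x) μ := Integrable.of_mem_Icc 0 1 aemeasurable_id hμ
  have hsub := hasSubgaussianMGF_of_mem_Icc (X := fun x : ℝ => x) aemeasurable_id hν
  set m := ∫ x, x ∂ν with hm
  set δ := (∫ x, x ∂μ) - m with hδ
  -- `t = 4 * δ` maximizes `t * δ - t ^ 2 / 8`.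
  set f : ℝ → ℝ := fun x => (4 * δ) * (x - m) with hf
  have hfμ : Integrable f μ := (hiμ.sub (integrable_const m)).const_mul _
  have hfν : Integrable (fun x => Real.exp (f x)) ν := hsub.integrable_exp_mul (4 * δ)
  have := isProbabilityMeasure_tilted hfν
  have hac' : μ ≪ ν.tilted f := hac.trans (absolutelyContinuous_tilted hfν)
  have hnn := InformationTheory.integral_llr_add_sub_measure_univ_nonneg hac'
    (integrable_llr_tilted_right hac hfμ hint hfν)
  rw [integral_llr_tilted_right hac hfμ hfν hint] at hnn
  have hfi : ∫ x, f x ∂μ = 4 * δ * δ := by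
    simp only [hf]
    rw [integral_const_mul, integral_sub hiμ (integrable_const m)]
    simp [hδ]
  have hmgf : Real.log (∫ x, Real.exp (f x) ∂ν) ≤ 2 * δ ^ 2 := by
    rw [Real.log_le_iff_le_exp (integral_exp_pos hfν)]
    refine (hsub.mgf_le (4 * δ)).trans (Real.exp_le_exp.mpr (le_of_eq ?_))
    simp
    ring
  have hllr : ∫ x, llr μ ν x ∂μ = ∫ x, Real.log (μ.rnDeriv ν x).toReal ∂μ := rfl
  simp only [probReal_univ, hfi, hllr] at hnn
  linarith

/-- The law of total expectation for a mixture selected by a finitely valued variable, written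
with unnormalized conditional means. -/
lemma integral_select {Ω : Type*} [MeasurableSpace Ω] (P : Measure Ω)
    {K : Type*} [Fintype K] [MeasurableSpace K] [MeasurableSingletonClass K]
    (A : Ω → K) (hA : Measurable A) (Y : K → Ω → ℝ) (hY : ∀ a, Integrable (Y a) P) :
    ∫ ω, Y (A ω) ω ∂P = ∑ a, ∫ ω in {ω | A ω = a}, Y a ω ∂P := by
  have hs : ∀ a, MeasurableSet {ω | A ω = a} := fun a => hA (measurableSet_singleton a)
  have h1 : ∀ ω, Y (A ω) ω = ∑ a, Set.indicator {ω | A ω = a} (Y a) ω := by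
    intro ω
    rw [Finset.sum_eq_single (A ω)]
    · simp
    · intro b _ hb
      simp [Ne.symm hb]
    · simp
  simp_rw [h1]
  rw [integral_finsetSum _ fun a _ => (hY a).indicator (hs a)]
  exact Finset.sum_congr rfl fun a _ => integral_indicator (hs a)

/-- Information ratio bound for Thompson Sampling, explicit KL form: with
`α a = P(A* = a)`, `d(a,a*)` the KL divergence of the law of `Y_a` given
`A* = a*` with respect to its unconditional law, `N_α(a) = ∑_{a' → a} α a'`
and `ḡ(a) = ∑_{a*} α a* * d(a,a*)`, the squared expected instantaneous regret
of Thompson Sampling satisfies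
`(E[Y_{A*}] − ∑ a, α a E[Y_a])² ≤ (1/2) * Q_G(α) * ∑ a, N_α(a) * ḡ(a)` where
`Q_G(α) = ∑ a, α a / N_α(a)`. -/
theorem stmt8 {Ω : Type*} [MeasurableSpace Ω] (P : Measure Ω) [IsProbabilityMeasure P]
    {K : Type*} [Fintype K] [Nonempty K] [MeasurableSpace K] [MeasurableSingletonClass K]
    (Astar : Ω → K) (hA : Measurable Astar)
    (hα : ∀ a, 0 < P {ω | Astar ω = a})
    (Y : K → Ω → ℝ) (hY : ∀ a, Measurable (Y a))
    (hY0 : ∀ a ω, 0 ≤ Y a ω) (hY1 : ∀ a ω, Y a ω ≤ 1)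
    (G : K → K → Prop) [DecidableRel G] (hloop : ∀ i, G i i)
    (α : K → ℝ) (hαdef : ∀ a, α a = (P {ω | Astar ω = a}).toReal)
    (d : K → K → ℝ≥0∞)
    (hddef : ∀ a astar, d a astar =
      klDiv (Measure.map (Y a) (P[|{ω | Astar ω = astar}])) (Measure.map (Y a) P)) :
    ENNReal.ofReal (((∫ ω, Y (Astar ω) ω ∂P) - ∑ a, α a * ∫ ω, Y a ω ∂P) ^ 2) ≤
      ENNReal.ofReal
          ((1/2) * ∑ a, α a / (∑ a' ∈ univ.filter (fun a' => G a' a), α a')) *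
        ∑ a, ENNReal.ofReal (∑ a' ∈ univ.filter (fun a' => G a' a), α a') *
          (∑ astar, ENNReal.ofReal (α astar) * d a astar) := by
  have hs : ∀ a, MeasurableSet {ω | Astar ω = a} := fun a => hA (measurableSet_singleton a)
  have hYint : ∀ a, Integrable (Y a) P := fun a =>
    Integrable.of_mem_Icc 0 1 (hY a).aemeasurable (ae_of_all _ fun ω => ⟨hY0 a ω, hY1 a ω⟩)
  have hαpos : ∀ a, 0 < α a := fun a => by
    rw [hαdef]
    exact ENNReal.toReal_pos (hα a).ne' (measure_ne_top _ _)
  set N : K → ℝ := fun a => ∑ a' ∈ univ.filter (fun a' => G a' a), α a' with hN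
  -- The self-loop at `a` makes `N a` positive, so the quotients `α a / N a` are genuine.
  have hNpos : ∀ a, 0 < N a := fun a =>
    Finset.sum_pos (fun i _ => hαpos i) ⟨a, by simpa using hloop a⟩
  set δ : K → ℝ := fun a => (∫ ω, Y a ω ∂(P[|{ω | Astar ω = a}])) - ∫ ω, Y a ω ∂P with hδ
  have hreg : (∫ ω, Y (Astar ω) ω ∂P) - ∑ a, α a * ∫ ω, Y a ω ∂P = ∑ a, α a * δ a := by
    rw [integral_select P Astar hA Y hYint, ← Finset.sum_sub_distrib]
    refine Finset.sum_congr rfl fun a _ => ?_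
    have hne := (hαpos a).ne'
    simp only [hδ, ProbabilityTheory.cond, integral_smul_measure, ENNReal.toReal_inv, ← hαdef,
      smul_eq_mul]
    field_simp
  have hpin : ∀ a, ENNReal.ofReal (2 * δ a ^ 2) ≤ d a a := fun a => by
    have := cond_isProbabilityMeasure (μ := P) (hα a).ne'
    have := Measure.isProbabilityMeasure_map (μ := P) (hY a).aemeasurable
    have := Measure.isProbabilityMeasure_map (μ := P[|{ω | Astar ω = a}]) (hY a).aemeasurable
    have h := pinsker_unitInterval (Measure.map (Y a) (P[|{ω | Astar ω = a}]))
      (Measure.map (Y a) P) ((ae_map_iff (hY a).aemeasurable measurableSet_Icc).2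
        (ae_of_all _ fun ω => ⟨hY0 a ω, hY1 a ω⟩))
    rw [integral_map (f := fun x : ℝ => x) (hY a).aemeasurable aestronglyMeasurable_id,
      integral_map (f := fun x : ℝ => x) (hY a).aemeasurable aestronglyMeasurable_id] at h
    rw [hddef]
    exact h
  have hCS : (∑ a, α a * δ a) ^ 2 ≤
      ((1/2) * ∑ a, α a / N a) * ∑ a, N a * (α a * (2 * δ a ^ 2)) := by
    have h := Finset.sum_sq_le_sum_mul_sum_of_sq_le_mul univ
      (r := fun a => α a * δ a) (f := fun a => α a / N a) (g := fun a => N a * (α a * δ a ^ 2))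
      (fun a _ => (div_pos (hαpos a) (hNpos a)).le)
      (fun a _ => mul_nonneg (hNpos a).le (mul_nonneg (hαpos a).le (sq_nonneg _)))
      (fun a _ => by
        have := (hNpos a).ne'
        exact le_of_eq (by field_simp))
    refine h.trans (le_of_eq ?_)
    have h2 : ∑ a, N a * (α a * (2 * δ a ^ 2)) = 2 * ∑ a, N a * (α a * δ a ^ 2) := by
      rw [Finset.mul_sum]
      exact Finset.sum_congr rfl fun a _ => by ring
    rw [h2]
    ring
  have hQ : 0 ≤ (1/2) * ∑ a, α a / N a :=
    mul_nonneg (by norm_num) (Finset.sum_nonneg fun a _ => (div_pos (hαpos a) (hNpos a)).le)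
  rw [hreg]
  refine (ENNReal.ofReal_le_ofReal hCS).trans ?_
  rw [ENNReal.ofReal_mul hQ]
  gcongr
  rw [ENNReal.ofReal_sum_of_nonneg fun a _ =>
    mul_nonneg (hNpos a).le (mul_nonneg (hαpos a).le (by positivity))]
  refine Finset.sum_le_sum fun a _ => ?_
  rw [ENNReal.ofReal_mul (hNpos a).le, ENNReal.ofReal_mul (hαpos a).le]
  gcongr
  refine (mul_le_mul_right (hpin a) _).trans ?_
  exact Finset.single_le_sum (f := fun astar => ENNReal.ofReal (α astar) * d a astar)
    (fun _ _ => zero_le) (Finset.mem_univ a)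
end

section
/- Let K be a finite nonempty set, G a directed graph on K containing every self-loop, 0 ≤ ε < 1, α a probability vector on K, π a probability vector on K with π(a) ≥ (1−ε) α(a) and π(a) > 0 for all a ∈ K, and x : K → ℝ nonnegative. Writing N_π(a) = ∑_{a': (a',a) is an arc of G} π(a'), one has (∑_{a∈K} α(a) x(a))² ≤ (1/(1−ε)) · Q_G(π) · ∑_{a∈K} N_π(a) α(a) x(a)², where Q_G(π) = ∑_{a∈K} π(a)/N_π(a). -/
/-!
The inequality is Cauchy–Schwarz with weights `α a / N a` and `N a * α a * x a ^ 2`, where `N a` is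
the `π`-mass of the in-neighbourhood of `a`, followed by the termwise bound `α a ≤ π a / (1 - ε)`,
which turns `∑ a, α a / N a` into at most `(1 / (1 - ε)) * ∑ a, π a / N a`.
-/

open Finset

/-- Bridging inequality in the TS-U analysis: for a directed feedback graph `G`
containing every self-loop, `0 ≤ ε < 1`, probability vectors `α` and `π` with
`π a ≥ (1 − ε) * α a` and `π a > 0` for all `a`, and nonnegative `x`, writing
`N_π(a) = ∑_{a' : a' → a} π a'`,
`(∑ a, α a * x a)² ≤ (1/(1−ε)) * Q_G(π) * ∑ a, N_π(a) * α a * (x a)²`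
where `Q_G(π) = ∑ a, π a / N_π(a)`. -/
theorem stmt10 {K : Type*} [Fintype K] [Nonempty K]
    (G : K → K → Prop) [DecidableRel G] (hloop : ∀ i, G i i)
    (ε : ℝ) (hε0 : 0 ≤ ε) (hε1 : ε < 1)
    (α : K → ℝ) (hα0 : ∀ i, 0 ≤ α i) (hα1 : ∑ i, α i = 1)
    (π : K → ℝ) (hπ0 : ∀ i, 0 ≤ π i) (hπ1 : ∑ i, π i = 1)
    (hπα : ∀ a, (1 - ε) * α a ≤ π a) (hπpos : ∀ a, 0 < π a)
    (x : K → ℝ) (hx : ∀ a, 0 ≤ x a) :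
    (∑ a, α a * x a) ^ 2 ≤
      (1 / (1 - ε)) * (∑ a, π a / (∑ a' ∈ univ.filter (fun a' => G a' a), π a')) *
        ∑ a, (∑ a' ∈ univ.filter (fun a' => G a' a), π a') * α a * (x a) ^ 2 := by
  set N : K → ℝ := fun a => ∑ a' ∈ univ.filter (fun a' => G a' a), π a'
  have hε : 0 < 1 - ε := sub_pos.mpr hε1
  -- The self-loop at `a` keeps the in-neighbourhood sum nonempty, so no division by zero occurs.
  have hNpos : ∀ a, 0 < N a := fun a =>
    sum_pos (fun i _ => hπpos i) ⟨a, by simp [hloop a]⟩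
  -- Cauchy–Schwarz for the splitting `α x = √(α / N) · √(N α x²)`.
  have hCS : (∑ a, α a * x a) ^ 2 ≤ (∑ a, α a / N a) * ∑ a, N a * α a * x a ^ 2 := by
    refine sum_sq_le_sum_mul_sum_of_sq_le_mul univ
      (fun a _ => div_nonneg (hα0 a) (hNpos a).le)
      (fun a _ => mul_nonneg (mul_nonneg (hNpos a).le (hα0 a)) (sq_nonneg _)) (fun a _ => le_of_eq ?_)
    have := (hNpos a).ne'
    field_simp
  have hQ : ∑ a, α a / N a ≤ 1 / (1 - ε) * ∑ a, π a / N a := by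
    rw [mul_sum]
    refine sum_le_sum fun a _ => ?_
    rw [← mul_div_assoc]
    refine div_le_div_of_nonneg_right ?_ (hNpos a).le
    rw [one_div, inv_mul_eq_div, le_div_iff₀ hε, mul_comm]
    exact hπα a
  exact hCS.trans (mul_le_mul_of_nonneg_right hQ
    (sum_nonneg fun a _ => mul_nonneg (mul_nonneg (hNpos a).le (hα0 a)) (sq_nonneg _)))
end

section
/- (One-step regret bound for TS-U, explicit KL form.) Under the Bayesian bandit setup, let 0 ≤ ε < 1, let π(a) = (1−ε) α(a) + ε/|K|, let G be a directed feedback graph on K containing every self-loop, and set N_π(a) = ∑_{a': (a',a) is an arc of G} π(a'), ḡ(a) = ∑_{a*∈K} α(a*) d(a, a*), and Q_G(π) = ∑_{a∈K} π(a)/N_π(a). Then ∑_{a∈K} π(a) (E[Y_{A*}] − E[Y_a]) ≤ ε + √( ((1−ε)/2) · Q_G(π) · ∑_{a∈K} N_π(a) ḡ(a) ). -/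
/-!
Writing `x a = E[Y_a | A* = a] - E[Y_a]`, one has `E[Y_{A*}] - ∑ a, α a E[Y_a] = ∑ a, α a x a`, so
the exploitation part of the regret is `(1 - ε) ∑ a, α a x a`, while the uniform exploration part is
at most `ε` because rewards lie in `[0,1]`.

A Pinsker-type inequality `2 (x a)² ≤ d(a, a)` (`two_mul_sq_integral_sub_le_klDiv`) follows from
Gibbs' inequality for the exponentially tilted measure `ν.tilted (t (y - E_ν y))`, together with
Hoeffding's lemma, at the optimal `t = 4 x a`. Cauchy–Schwarz with the weights `π a / N a` and the
bound `(1 - ε) α a ≤ π a` then give `((1 - ε) ∑ α x)² ≤ (1 - ε) Q ∑ N α x²`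
(`sq_sum_le_of_mixture`). Finally `α a d(a, a) ≤ ḡ(a)`, keeping only the diagonal term.
-/

open MeasureTheory ENNReal Classical Finset ProbabilityTheory

/-- A Pinsker-type bound for means: two probability laws on `[0,1]` with means differing by `Δ` have
divergence at least `2 Δ²`. -/
lemma two_mul_sq_integral_sub_le_klDiv (μ ν : Measure ℝ) [IsProbabilityMeasure μ]
    [IsProbabilityMeasure ν] (hν : ∀ᵐ y ∂ν, y ∈ Set.Icc (0 : ℝ) 1) :
    ENNReal.ofReal (2 * ((∫ y, y ∂μ) - ∫ y, y ∂ν) ^ 2) ≤ klDiv μ ν := by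
  unfold klDiv
  split_ifs with h
  swap
  · exact le_top
  obtain ⟨hac, hint⟩ := h
  apply ENNReal.ofReal_le_ofReal
  change Integrable (llr μ ν) μ at hint
  change _ ≤ ∫ y, llr μ ν y ∂μ
  have hμ : ∀ᵐ y ∂μ, y ∈ Set.Icc (0 : ℝ) 1 := hac.ae_le hν
  have hIμ : Integrable (fun y : ℝ => y) μ := Integrable.of_mem_Icc 0 1 aemeasurable_id hμ
  have hsub := hasSubgaussianMGF_of_mem_Icc (X := fun y : ℝ => y) (μ := ν) aemeasurable_id hν
  set m := ∫ y, y ∂ν with hm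
  set M := ∫ y, y ∂μ with hM
  -- `t = 4 Δ` maximises `t Δ - t² / 8`.
  set t : ℝ := 4 * (M - m) with ht
  have hexp := hsub.integrable_exp_mul t
  have hmgf := hsub.mgf_le t
  have hfμ : Integrable (fun y : ℝ => t * (y - m)) μ := (hIμ.sub (integrable_const m)).const_mul t
  have hval := integral_llr_tilted_right hac hfμ hexp hint
  have hint' := integrable_llr_tilted_right hac hfμ hint hexp
  have : IsProbabilityMeasure (ν.tilted (fun y => t * (y - m))) := isProbabilityMeasure_tilted hexp
  have hgibbs := InformationTheory.integral_llr_add_sub_measure_univ_nonneg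
    (hac.trans (absolutelyContinuous_tilted hexp)) hint'
  simp only [probReal_univ, add_sub_cancel_right] at hgibbs
  have hlin : ∫ y, t * (y - m) ∂μ = t * (M - m) := by
    rw [integral_const_mul, integral_sub hIμ (integrable_const m)]
    simp [hM]
  have hlog : Real.log (∫ y, Real.exp (t * (y - m)) ∂ν) ≤ t ^ 2 / 8 := by
    have h1 := Real.log_le_log (integral_exp_pos hexp) hmgf
    rw [Real.log_exp] at h1
    refine h1.trans (le_of_eq ?_)
    simp
    ring
  rw [hval, hlin] at hgibbs
  nlinarith

/-- The Pinsker-type bound for a `[0,1]`-valued random variable: `E[Y | s] - E[Y]` is controlled by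
the divergence between the conditional and the unconditional law of `Y`. -/
lemma two_mul_sq_cond_sub_le_klDiv {Ω : Type*} [MeasurableSpace Ω] (P : Measure Ω)
    [IsProbabilityMeasure P] (s : Set Ω) (hs : P s ≠ 0) (Y : Ω → ℝ) (hY : Measurable Y)
    (hY0 : ∀ ω, 0 ≤ Y ω) (hY1 : ∀ ω, Y ω ≤ 1) :
    ENNReal.ofReal (2 * ((∫ ω, Y ω ∂P[|s]) - ∫ ω, Y ω ∂P) ^ 2) ≤
      klDiv (Measure.map Y (P[|s])) (Measure.map Y P) := by
  have : IsProbabilityMeasure (P[|s]) := cond_isProbabilityMeasure hs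
  have := Measure.isProbabilityMeasure_map (μ := P) hY.aemeasurable
  have := Measure.isProbabilityMeasure_map (μ := P[|s]) hY.aemeasurable
  have h := two_mul_sq_integral_sub_le_klDiv (Measure.map Y (P[|s])) (Measure.map Y P) (by
    refine (ae_map_iff hY.aemeasurable (measurableSet_Icc (a := (0 : ℝ)) (b := 1))).2 ?_
    exact ae_of_all _ fun ω => ⟨hY0 ω, hY1 ω⟩)
  rwa [integral_map (f := fun y : ℝ => y) hY.aemeasurable aestronglyMeasurable_id,
    integral_map (f := fun y : ℝ => y) hY.aemeasurable aestronglyMeasurable_id] at h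

/-- Law of total expectation for the reward of the random arm `A*`. -/
lemma integral_random_arm {Ω : Type*} [MeasurableSpace Ω] (P : Measure Ω) [IsProbabilityMeasure P]
    {K : Type*} [Fintype K] [MeasurableSpace K] [MeasurableSingletonClass K]
    (Astar : Ω → K) (hA : Measurable Astar) (hα : ∀ a, P {ω | Astar ω = a} ≠ 0)
    (Y : K → Ω → ℝ) (hI : ∀ a, Integrable (Y a) P) :
    ∫ ω, Y (Astar ω) ω ∂P =
      ∑ a, (P {ω | Astar ω = a}).toReal * ∫ ω, Y a ω ∂(P[|{ω | Astar ω = a}]) := by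
  have hms : ∀ a, MeasurableSet {ω | Astar ω = a} := fun a => hA (measurableSet_singleton a)
  have h1 : ∀ ω, Y (Astar ω) ω = ∑ a, Set.indicator {ω | Astar ω = a} (Y a) ω := by
    intro ω
    simp [Set.indicator_apply]
  simp_rw [h1]
  rw [integral_finsetSum _ fun a _ => (hI a).indicator (hms a)]
  refine sum_congr rfl fun a _ => ?_
  rw [integral_indicator (hms a), ProbabilityTheory.cond, integral_smul_measure, smul_eq_mul,
    ENNReal.toReal_inv, mul_inv_cancel_left₀]
  exact ENNReal.toReal_ne_zero.2 ⟨hα a, measure_ne_top _ _⟩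

/-- Cauchy–Schwarz with weights `π / N`, where `π` dominates the multiple `c α` of `α`. -/
lemma sq_sum_le_of_mixture {K : Type*} [Fintype K] (c : ℝ) (hc : 0 ≤ c) (α π N x : K → ℝ)
    (hα : ∀ a, 0 ≤ α a) (hπ : ∀ a, 0 < π a) (hN : ∀ a, 0 < N a) (hle : ∀ a, c * α a ≤ π a) :
    (c * ∑ a, α a * x a) ^ 2 ≤ (c / 2 * ∑ a, π a / N a) * ∑ a, N a * (α a * (2 * x a ^ 2)) := by
  have hCS := sum_sq_le_sum_mul_sum_of_sq_le_mul univ (r := fun a => c * (α a * x a))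
    (f := fun a => π a / N a) (g := fun a => N a / π a * (c * (α a * x a)) ^ 2)
    (fun a _ => (div_pos (hπ a) (hN a)).le)
    (fun a _ => mul_nonneg (div_pos (hN a) (hπ a)).le (sq_nonneg _))
    (fun a _ => le_of_eq <| by
      have := (hπ a).ne'
      have := (hN a).ne'
      field_simp)
  rw [mul_sum]
  refine hCS.trans ?_
  have hQ : 0 ≤ ∑ a, π a / N a := sum_nonneg fun a _ => (div_pos (hπ a) (hN a)).le
  have hterm : ∑ a, N a / π a * (c * (α a * x a)) ^ 2 ≤
      c / 2 * ∑ a, N a * (α a * (2 * x a ^ 2)) := by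
    rw [mul_sum]
    refine sum_le_sum fun a _ => ?_
    have h0 : 0 ≤ c * (α a * x a ^ 2) * N a :=
      mul_nonneg (mul_nonneg hc (mul_nonneg (hα a) (sq_nonneg _))) (hN a).le
    have h1 : c * α a / π a ≤ 1 := (div_le_one (hπ a)).2 (hle a)
    calc N a / π a * (c * (α a * x a)) ^ 2
        = (c * α a / π a) * (c * (α a * x a ^ 2) * N a) := by ring
      _ ≤ 1 * (c * (α a * x a ^ 2) * N a) := mul_le_mul_of_nonneg_right h1 h0
      _ = c / 2 * (N a * (α a * (2 * x a ^ 2))) := by ring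
  calc _ ≤ (∑ a, π a / N a) * (c / 2 * ∑ a, N a * (α a * (2 * x a ^ 2))) :=
        mul_le_mul_of_nonneg_left hterm hQ
    _ = _ := by ring

/-- One-step regret bound for TS-U, explicit KL form: with
`α a = P(A* = a)`, `π a = (1−ε) α a + ε/|K|`, a directed feedback graph `G`
containing every self-loop, `N_π(a) = ∑_{a' → a} π a'`,
`ḡ(a) = ∑_{a*} α a* * d(a,a*)` and `Q_G(π) = ∑ a, π a / N_π(a)`:
`∑ a, π a (E[Y_{A*}] − E[Y_a]) ≤ ε + √( ((1−ε)/2) Q_G(π) ∑ a, N_π(a) ḡ(a) )`. -/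
theorem stmt12 {Ω : Type*} [MeasurableSpace Ω] (P : Measure Ω) [IsProbabilityMeasure P]
    {K : Type*} [Fintype K] [Nonempty K] [MeasurableSpace K] [MeasurableSingletonClass K]
    (Astar : Ω → K) (hA : Measurable Astar)
    (hα : ∀ a, 0 < P {ω | Astar ω = a})
    (Y : K → Ω → ℝ) (hY : ∀ a, Measurable (Y a))
    (hY0 : ∀ a ω, 0 ≤ Y a ω) (hY1 : ∀ a ω, Y a ω ≤ 1)
    (ε : ℝ) (hε0 : 0 ≤ ε) (hε1 : ε < 1)
    (α : K → ℝ) (hαdef : ∀ a, α a = (P {ω | Astar ω = a}).toReal)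
    (π : K → ℝ) (hπdef : ∀ a, π a = (1 - ε) * α a + ε / (Fintype.card K : ℝ))
    (G : K → K → Prop) [DecidableRel G] (hloop : ∀ i, G i i)
    (d : K → K → ℝ≥0∞)
    (hddef : ∀ a astar, d a astar =
      klDiv (Measure.map (Y a) (P[|{ω | Astar ω = astar}])) (Measure.map (Y a) P)) :
    ENNReal.ofReal (∑ a, π a * ((∫ ω, Y (Astar ω) ω ∂P) - ∫ ω, Y a ω ∂P)) ≤
      ENNReal.ofReal ε +
        (ENNReal.ofReal
            (((1 - ε) / 2) * ∑ a, π a / (∑ a' ∈ univ.filter (fun a' => G a' a), π a')) *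
          ∑ a, ENNReal.ofReal (∑ a' ∈ univ.filter (fun a' => G a' a), π a') *
            (∑ astar, ENNReal.ofReal (α astar) * d a astar)) ^ (1/2 : ℝ) := by
  have hα' : ∀ a, P {ω | Astar ω = a} ≠ 0 := fun a => (hα a).ne'
  have hαpos : ∀ a, 0 < α a := fun a => by
    rw [hαdef]
    exact ENNReal.toReal_pos (hα' a) (measure_ne_top _ _)
  have hcard : (0 : ℝ) < Fintype.card K := by exact_mod_cast Fintype.card_pos
  have hc : 0 < 1 - ε := by linarith
  have hle : ∀ a, (1 - ε) * α a ≤ π a := fun a => by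
    rw [hπdef]
    have := div_nonneg hε0 hcard.le
    linarith
  have hπpos : ∀ a, 0 < π a := fun a => (mul_pos hc (hαpos a)).trans_le (hle a)
  set N : K → ℝ := fun a => ∑ a' ∈ univ.filter (fun a' => G a' a), π a' with hNdef
  have hN : ∀ a, 0 < N a := fun a =>
    sum_pos (fun i _ => hπpos i) ⟨a, mem_filter.2 ⟨mem_univ _, hloop a⟩⟩
  have hI : ∀ a, Integrable (Y a) P := fun a =>
    Integrable.of_mem_Icc 0 1 (hY a).aemeasurable (ae_of_all _ fun ω => ⟨hY0 a ω, hY1 a ω⟩)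
  set x : K → ℝ := fun a => (∫ ω, Y a ω ∂P[|{ω | Astar ω = a}]) - ∫ ω, Y a ω ∂P with hx
  set S : ℝ := ∑ a, N a * (α a * (2 * x a ^ 2)) with hS
  set R : ℝ := (1 - ε) / 2 * ∑ a, π a / N a with hR
  have hR0 : 0 ≤ R :=
    mul_nonneg (by linarith) (sum_nonneg fun a _ => (div_pos (hπpos a) (hN a)).le)
  have hS0 : ∀ a, 0 ≤ N a * (α a * (2 * x a ^ 2)) := fun a =>
    mul_nonneg (hN a).le (mul_nonneg (hαpos a).le (by positivity))
  have hKL : ENNReal.ofReal S ≤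
      ∑ a, ENNReal.ofReal (N a) * (∑ astar, ENNReal.ofReal (α astar) * d a astar) := by
    rw [hS, ENNReal.ofReal_sum_of_nonneg fun a _ => hS0 a]
    refine sum_le_sum fun a _ => ?_
    rw [ENNReal.ofReal_mul (hN a).le, ENNReal.ofReal_mul (hαpos a).le]
    gcongr
    refine le_trans ?_ (single_le_sum (f := fun astar => ENNReal.ofReal (α astar) * d a astar)
      (fun i _ => zero_le) (mem_univ a))
    gcongr
    rw [hddef]
    exact two_mul_sq_cond_sub_le_klDiv P _ (hα' a) (Y a) (hY a) (hY0 a) (hY1 a)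
  have hreg : ∑ a, π a * ((∫ ω, Y (Astar ω) ω ∂P) - ∫ ω, Y a ω ∂P) ≤
      ε + (1 - ε) * ∑ a, α a * x a := by
    have htot := integral_random_arm P Astar hA hα' Y hI
    simp_rw [← hαdef] at htot
    set E : ℝ := ∫ ω, Y (Astar ω) ω ∂P with hE
    have hE1 : E ≤ 1 := by
      by_cases hi : Integrable (fun ω => Y (Astar ω) ω) P
      · have := integral_mono hi (integrable_const (1 : ℝ)) fun ω => hY1 (Astar ω) ω
        simpa using this
      · rw [hE, integral_undef hi]
        exact zero_le_one
    have hα1 : ∑ a, α a = 1 := by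
      have := integral_random_arm P Astar hA hα' (fun _ _ => (1 : ℝ)) fun _ => integrable_const _
      have hp : ∀ a, IsProbabilityMeasure (P[|{ω | Astar ω = a}]) :=
        fun a => cond_isProbabilityMeasure (hα' a)
      simpa [hαdef] using this.symm
    have hexplore : ∑ a, ε / (Fintype.card K : ℝ) * (E - ∫ ω, Y a ω ∂P) ≤ ε := by
      calc ∑ a, ε / (Fintype.card K : ℝ) * (E - ∫ ω, Y a ω ∂P)
          ≤ ∑ _a : K, ε / (Fintype.card K : ℝ) * 1 := by
            refine sum_le_sum fun a _ => mul_le_mul_of_nonneg_left ?_ (div_nonneg hε0 hcard.le)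
            have : 0 ≤ ∫ ω, Y a ω ∂P := integral_nonneg (hY0 a)
            linarith
        _ = ε := by
            simp
            field_simp
    have hexploit : ∑ a, α a * (E - ∫ ω, Y a ω ∂P) = ∑ a, α a * x a := by
      simp only [hx, mul_sub, sum_sub_distrib]
      rw [← sum_mul, hα1, one_mul, htot]
    calc ∑ a, π a * (E - ∫ ω, Y a ω ∂P)
        = (1 - ε) * ∑ a, α a * (E - ∫ ω, Y a ω ∂P)
          + ∑ a, ε / (Fintype.card K : ℝ) * (E - ∫ ω, Y a ω ∂P) := by
          rw [mul_sum, ← sum_add_distrib]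
          exact sum_congr rfl fun a _ => by rw [hπdef]; ring
      _ ≤ ε + (1 - ε) * ∑ a, α a * x a := by rw [hexploit]; linarith
  have hCS := sq_sum_le_of_mixture (1 - ε) hc.le α π N x (fun a => (hαpos a).le) hπpos hN hle
  calc ENNReal.ofReal (∑ a, π a * ((∫ ω, Y (Astar ω) ω ∂P) - ∫ ω, Y a ω ∂P))
      ≤ ENNReal.ofReal (ε + (R * S) ^ (1 / 2 : ℝ)) := by
        refine ENNReal.ofReal_le_ofReal (hreg.trans ?_)
        rw [← Real.sqrt_eq_rpow]
        gcongr
        exact Real.le_sqrt_of_sq_le hCS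
    _ = ENNReal.ofReal ε + (ENNReal.ofReal R * ENNReal.ofReal S) ^ (1 / 2 : ℝ) := by
        have hRS : 0 ≤ R * S := mul_nonneg hR0 (sum_nonneg fun a _ => hS0 a)
        rw [ENNReal.ofReal_add hε0 (Real.rpow_nonneg hRS _), ← ENNReal.ofReal_mul hR0,
          ENNReal.ofReal_rpow_of_nonneg hRS (by norm_num)]
    _ ≤ _ := by gcongr
end
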